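/- Let N ≥ 3, let β > 0, let p, q > 1 satisfy N/(p+1) + N/(q+1) > N - 2, and set r = (q+1)/q. Then there exist C > 0 and α₀ > 0 such that for every α ≥ α₀ there exists u ∈ 𝒟 with R(u) = (∫_B |x|^{-β(r-1)} |Δu(x)|^r dx) / (∫_B |x|^α |u(x)|^{p+1} dx)^{r/(p+1)} ≤ C α^{2r - N + Nr/(p+1)}; equivalently S_{α,β} ≤ C α^{2r - N + Nr/(p+1)} for all α ≥ α₀. -/

import Mathlib

open MeasureTheory Metric Set Filter

noncomputable section

abbrev E (N : ℕ) := EuclideanSpace ℝ (Fin N)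

/-- The Laplacian: sum of pure second partial derivatives. -/
def lap {N : ℕ} (u : E N → ℝ) (x : E N) : ℝ :=
  ∑ i, fderiv ℝ (fun y => fderiv ℝ u y (EuclideanSpace.single i 1)) x (EuclideanSpace.single i 1)
/-- The admissible class 𝒟: C² functions on the closed unit ball, vanishing on the
boundary sphere, not identically zero. -/
def memD {N : ℕ} (u : E N → ℝ) : Prop :=
  ContDiffOn ℝ 2 u (closedBall 0 1) ∧
  (∀ x : E N, ‖x‖ = 1 → u x = 0) ∧
  ∃ x ∈ closedBall (0 : E N) 1, u x ≠ 0

/-- A function is radial if its value depends only on the norm. -/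
def radial {N : ℕ} (u : E N → ℝ) : Prop := ∀ x y : E N, ‖x‖ = ‖y‖ → u x = u y

/-- The weighted second-order Rayleigh quotient
R(u) = (∫_B |x|^{-β(r-1)} |Δu|^r) / (∫_B |x|^α |u|^{p+1})^{r/(p+1)}. -/
def ray2 {N : ℕ} (α β p r : ℝ) (u : E N → ℝ) : ℝ :=
  (∫ x in ball (0 : E N) 1, ‖x‖ ^ (-β * (r - 1)) * |lap u x| ^ r) /
    (∫ x in ball (0 : E N) 1, ‖x‖ ^ α * |u x| ^ (p + 1)) ^ (r / (p + 1))

/-- The ground-state level S_{α,β}. -/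
def S2 (N : ℕ) (α β p r : ℝ) : ℝ :=
  sInf {c | ∃ u : E N → ℝ, memD u ∧ ray2 α β p r u = c}

/-- The radial ground-state level S^rad_{α,β}. -/
def S2rad (N : ℕ) (α β p r : ℝ) : ℝ :=
  sInf {c | ∃ u : E N → ℝ, memD u ∧ radial u ∧ ray2 α β p r u = c}

/-!
Transplant a fixed smooth bump, rescaled to width of order `1 / α`, to a point at distance
`2 / α` from the unit sphere. On its support `|x|` stays in `[1 - 3 / α, 1]`, so both weights
`|x| ^ (-β (r - 1))` and `|x| ^ α` are comparable to constants, uniformly in `α`. The quotient then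
scales like the unweighted one: `Δ` costs a factor `α ^ 2` and each integral a volume `α ^ (-N)`,
which gives `α ^ (2 r - N) / α ^ (-N r / (p + 1))`.
-/

section Laplacian

variable {N : ℕ} {g : E N → ℝ}

lemma fderiv_comp_smul_sub_apply {V : Type*} [NormedAddCommGroup V] [NormedSpace ℝ V]
    (g : V → ℝ) (a : ℝ) (x₀ y v : V) :
    fderiv ℝ (fun x ↦ g (a • (x - x₀))) y v = a * fderiv ℝ g (a • (y - x₀)) v := by
  rw [fderiv_comp_sub (f := fun x ↦ g (a • x)), fderiv_comp_smul, smul_apply, smul_eq_mul]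

lemma lap_comp_smul_sub (g : E N → ℝ) (a : ℝ) (x₀ y : E N) :
    lap (fun x ↦ g (a • (x - x₀))) y = a ^ 2 * lap g (a • (y - x₀)) := by
  simp only [lap, Finset.mul_sum]
  refine Finset.sum_congr rfl fun i _ ↦ ?_
  let e : E N := EuclideanSpace.single i 1
  have first_order : (fun y ↦ fderiv ℝ (fun x ↦ g (a • (x - x₀))) y e) =
      a • fun y ↦ fderiv ℝ g (a • (y - x₀)) e :=
    funext fun y ↦ fderiv_comp_smul_sub_apply g a x₀ y e
  rw [first_order, fderiv_const_smul_field, Pi.smul_apply, smul_apply,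
    fderiv_comp_smul_sub_apply (fun y ↦ fderiv ℝ g y e), smul_eq_mul]
  ring

lemma lap_eq_zero_of_notMem_tsupport {x : E N} (hx : x ∉ tsupport g) : lap g x = 0 := by
  refine Finset.sum_eq_zero fun i _ ↦ ?_
  let e : E N := EuclideanSpace.single i 1
  have hsub : tsupport (fun y ↦ fderiv ℝ (fun z ↦ fderiv ℝ g z e) y e) ⊆ tsupport g :=
    (tsupport_fderiv_apply_subset ℝ e).trans (tsupport_fderiv_apply_subset ℝ e)
  exact Function.notMem_support.1 fun h ↦ hx (hsub (subset_tsupport _ h))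

lemma continuous_lap (hg : ContDiff ℝ 2 g) : Continuous (lap g) := by
  refine continuous_finsetSum _ fun i _ ↦ ?_
  have hg' : ContDiff ℝ 1 fun y ↦ fderiv ℝ g y (EuclideanSpace.single i 1) :=
    (hg.fderiv_right (by norm_num)).clm_apply contDiff_const
  exact (hg'.continuous_fderiv one_ne_zero).clm_apply continuous_const

lemma exists_abs_lap_le (hg : ContDiff ℝ 2 g) (hs : HasCompactSupport g) :
    ∃ M : ℝ, 0 < M ∧ ∀ x, |lap g x| ≤ M := by
  have hlap : HasCompactSupport (lap g) :=
    .intro hs fun _ hx ↦ lap_eq_zero_of_notMem_tsupport hx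
  obtain ⟨M, hM⟩ := hlap.exists_bound_of_continuous (continuous_lap hg)
  exact ⟨max M 1, by positivity, fun x ↦ (hM x).trans (le_max_left M 1)⟩

/- Bumps with the same ratio of radii are rescaled translates of one another, so the bound scales
like the inverse square of the radius. -/
lemma exists_abs_lap_contDiffBump_le (N : ℕ) {R : ℝ} (hR : 1 < R) :
    ∃ M : ℝ, 0 < M ∧ ∀ {c : E N} (f : ContDiffBump c), f.rOut / f.rIn = R →
      ∀ x, |lap f x| ≤ M * (f.rIn⁻¹) ^ 2 := by
  let ψ : ContDiffBump (0 : E N) := ⟨1, R, one_pos, hR⟩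
  obtain ⟨M, hM_pos, hM⟩ := exists_abs_lap_le ψ.contDiff ψ.hasCompactSupport
  refine ⟨M, hM_pos, fun {c} f hf x ↦ ?_⟩
  have hfψ : (f : E N → ℝ) = fun x ↦ ψ (f.rIn⁻¹ • (x - c)) := by
    funext x
    simp only [f.apply, ψ.apply, hf, ψ, div_one, inv_one, one_smul, sub_zero]
  rw [hfψ, lap_comp_smul_sub, abs_mul, abs_of_nonneg (sq_nonneg _), mul_comm]
  gcongr
  exact hM _

end Laplacian

section Weights

lemma rpow_le_rpow_neg_abs {a t : ℝ} (ha : 0 < a) (hat : a ≤ t) (ht : t ≤ 1) (γ : ℝ) :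
    t ^ γ ≤ a ^ (-|γ|) :=
  calc t ^ γ ≤ t ^ (-|γ|) :=
        Real.rpow_le_rpow_of_exponent_ge (ha.trans_le hat) ht (neg_abs_le γ)
    _ ≤ a ^ (-|γ|) := Real.rpow_le_rpow_of_nonpos ha hat (neg_nonpos.2 (abs_nonneg γ))

lemma half_rpow_le_rpow_of_one_sub_mul_inv_le {c α t : ℝ} (hc : 0 < c) (hα : 2 * c ≤ α)
    (ht : 1 - c * α⁻¹ ≤ t) : (1 / 2 : ℝ) ^ (2 * c) ≤ t ^ α := by
  rw [← div_eq_mul_inv] at ht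
  have hα_pos : 0 < α := by linarith
  have hcα : c / α ≤ 1 / 2 := by rw [div_le_iff₀ hα_pos]; linarith
  have bernoulli : 1 / 2 ≤ (1 - c / α) ^ (α / (2 * c)) := by
    have h := one_add_mul_self_le_rpow_one_add (s := -(c / α)) (by linarith)
      (p := α / (2 * c)) ((one_le_div (by positivity)).2 hα)
    have half_eq : 1 + α / (2 * c) * -(c / α) = 1 / 2 := by
      field_simp
      norm_num
    rwa [half_eq, ← sub_eq_add_neg] at h
  calc (1 / 2 : ℝ) ^ (2 * c)
      ≤ ((1 - c / α) ^ (α / (2 * c))) ^ (2 * c) := by gcongr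
    _ = (1 - c / α) ^ α := by
        rw [← Real.rpow_mul (by linarith), div_mul_cancel₀ _ (by positivity)]
    _ ≤ t ^ α := Real.rpow_le_rpow (by linarith) ht hα_pos.le

end Weights

section RayleighQuotient

variable {N : ℕ}

lemma ray2_nonneg (α β p r : ℝ) (u : E N → ℝ) : 0 ≤ ray2 α β p r u :=
  div_nonneg (integral_nonneg fun _ ↦ by positivity)
    (Real.rpow_nonneg (integral_nonneg fun _ ↦ by positivity) _)

lemma S2_le_ray2 {u : E N → ℝ} (hu : memD u) (α β p r : ℝ) : S2 N α β p r ≤ ray2 α β p r u :=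
  csInf_le ⟨0, by rintro _ ⟨v, _, rfl⟩; exact ray2_nonneg α β p r v⟩ ⟨u, hu, rfl⟩

lemma setIntegral_norm_rpow_mul_abs_lap_rpow_le {u : E N → ℝ} {s : Set (E N)} {γ r K L : ℝ}
    (hr : 0 < r) (hs : IsCompact s) (hs_ball : s ⊆ ball 0 1) (hu : tsupport u ⊆ s)
    (hK : ∀ x ∈ s, ‖x‖ ^ γ ≤ K) (hL : ∀ x, |lap u x| ≤ L) :
    ∫ x in ball (0 : E N) 1, ‖x‖ ^ γ * |lap u x| ^ r ≤ K * L ^ r * volume.real s := by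
  have hzero : ∀ x ∈ ball (0 : E N) 1 \ s, ‖x‖ ^ γ * |lap u x| ^ r = 0 := fun x hx ↦ by
    rw [lap_eq_zero_of_notMem_tsupport fun h ↦ hx.2 (hu h), abs_zero, Real.zero_rpow hr.ne',
      mul_zero]
  rw [setIntegral_eq_of_subset_of_forall_sdiff_eq_zero measurableSet_ball hs_ball hzero]
  refine (Real.le_norm_self _).trans
    (norm_setIntegral_le_of_norm_le_const hs.measure_lt_top fun x hx ↦ ?_)
  have hK_nonneg : 0 ≤ K := le_trans (by positivity) (hK x hx)
  rw [Real.norm_of_nonneg (by positivity)]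
  gcongr
  exacts [hK x hx, hL x]

lemma mul_measureReal_le_setIntegral_norm_rpow_mul_abs_rpow {u : E N → ℝ} {s : Set (E N)}
    {α m κ : ℝ} (hα : 0 ≤ α) (hm : 0 ≤ m) (hu : ContinuousOn u (closedBall 0 1))
    (hs : MeasurableSet s) (hs_ball : s ⊆ ball 0 1) (hκ : ∀ x ∈ s, κ ≤ ‖x‖ ^ α)
    (hu_one : ∀ x ∈ s, u x = 1) :
    κ * volume.real s ≤ ∫ x in ball (0 : E N) 1, ‖x‖ ^ α * |u x| ^ m := by
  have hcont : ContinuousOn (fun x ↦ ‖x‖ ^ α * |u x| ^ m) (closedBall 0 1) :=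
    (continuous_norm.continuousOn.rpow_const fun _ _ ↦ Or.inr hα).mul
      (hu.abs.rpow_const fun _ _ ↦ Or.inr hm)
  have hint : IntegrableOn (fun x ↦ ‖x‖ ^ α * |u x| ^ m) (ball 0 1) :=
    (hcont.integrableOn_compact (isCompact_closedBall 0 1)).mono_set ball_subset_closedBall
  have hs_fin : volume s ≠ ⊤ := ((measure_mono hs_ball).trans_lt measure_ball_lt_top).ne
  calc κ * volume.real s ≤ ∫ x in s, ‖x‖ ^ α * |u x| ^ m :=
        setIntegral_ge_of_const_le_real hs hs_fin
          (fun x hx ↦ by rw [hu_one x hx, abs_one, Real.one_rpow, mul_one]; exact hκ x hx)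
          (hint.mono_set hs_ball)
    _ ≤ ∫ x in ball (0 : E N) 1, ‖x‖ ^ α * |u x| ^ m :=
        setIntegral_mono_set hint (ae_of_all _ fun _ ↦ by positivity) hs_ball.eventuallyLE

end RayleighQuotient

section Bump

variable {N : ℕ} {x₀ : E N}

lemma memD_contDiffBump (f : ContDiffBump x₀) (hf : closedBall x₀ f.rOut ⊆ ball 0 1) :
    memD f := by
  refine ⟨f.contDiff.contDiffOn, fun x hx ↦ ?_, x₀, ?_, ?_⟩
  · refine image_eq_zero_of_notMem_tsupport fun hmem ↦ ?_
    rw [f.tsupport_eq] at hmem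
    exact (mem_ball_zero_iff.1 (hf hmem)).ne hx
  · exact ball_subset_closedBall (hf (mem_closedBall_self f.rOut_pos.le))
  · exact (f.pos_of_mem_ball (mem_ball_self f.rOut_pos)).ne'

lemma ray2_contDiffBump_le {α β p r K L κ : ℝ} (f : ContDiffBump x₀) (hα : 0 ≤ α) (hp : -1 < p)
    (hr : 0 < r) (hf : closedBall x₀ f.rOut ⊆ ball 0 1)
    (hK : ∀ x ∈ closedBall x₀ f.rOut, ‖x‖ ^ (-β * (r - 1)) ≤ K) (hL : ∀ x, |lap f x| ≤ L)
    (hκ_pos : 0 < κ) (hκ : ∀ x ∈ closedBall x₀ f.rIn, κ ≤ ‖x‖ ^ α) :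
    ray2 α β p r f ≤ K * L ^ r * volume.real (closedBall x₀ f.rOut) /
      (κ * volume.real (closedBall x₀ f.rIn)) ^ (r / (p + 1)) := by
  have numerator_le := setIntegral_norm_rpow_mul_abs_lap_rpow_le hr
    (isCompact_closedBall x₀ f.rOut) hf f.tsupport_eq.subset hK hL
  have le_denominator := mul_measureReal_le_setIntegral_norm_rpow_mul_abs_rpow hα
    (by linarith : 0 ≤ p + 1) f.continuous.continuousOn measurableSet_closedBall
    ((closedBall_subset_closedBall f.rIn_lt_rOut.le).trans hf) hκ
    (fun x hx ↦ f.one_of_mem_closedBall hx)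
  have volume_pos : 0 < volume.real (closedBall x₀ f.rIn) :=
    ENNReal.toReal_pos (measure_closedBall_pos _ _ f.rIn_pos).ne' measure_closedBall_lt_top.ne
  have numerator_nonneg : 0 ≤ ∫ x in ball (0 : E N) 1, ‖x‖ ^ (-β * (r - 1)) * |lap f x| ^ r :=
    integral_nonneg fun _ ↦ by positivity
  have exponent_nonneg : 0 ≤ r / (p + 1) := div_nonneg hr.le (by linarith)
  exact div_le_div₀ (numerator_nonneg.trans numerator_le) numerator_le (by positivity)
    (Real.rpow_le_rpow (by positivity) le_denominator exponent_nonneg)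

end Bump

section Concentration

lemma exists_forall_closedBall_norm_mem_Icc (V : Type*) [NormedAddCommGroup V] [NormedSpace ℝ V]
    [Nontrivial V] {ρ : ℝ} (hρ : 2 * ρ ≤ 1) :
    ∃ x₀ : V, ∀ x ∈ closedBall x₀ ρ, ‖x‖ ∈ Icc (1 - 3 * ρ) (1 - ρ) := by
  obtain ⟨x₀, hx₀⟩ := exists_norm_eq V (sub_nonneg.2 hρ)
  refine ⟨x₀, fun x hx ↦ ?_⟩
  have h := abs_le.1 ((abs_norm_sub_norm_le x x₀).trans (mem_closedBall_iff_norm.1 hx))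
  constructor <;> linarith [h.1, h.2]

lemma exists_contDiffBump_ray2_le {N : ℕ} [Nontrivial (E N)] {α p r : ℝ} (β : ℝ) (hα : 6 ≤ α)
    (hp : -1 < p) (hr : 0 < r) :
    ∃ (x₀ : E N) (f : ContDiffBump x₀), f.rIn = α⁻¹ / 2 ∧ f.rOut = α⁻¹ ∧ memD f ∧
      ∀ L : ℝ, (∀ x, |lap f x| ≤ L) → ray2 α β p r f ≤
        (1 / 2) ^ (-|-β * (r - 1)|) * L ^ r * (α⁻¹ ^ N * volume.real (ball (0 : E N) 1)) /
          ((1 / 2) ^ (2 * 3 : ℝ) * ((α⁻¹ / 2) ^ N * volume.real (ball (0 : E N) 1))) ^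
            (r / (p + 1)) := by
  have hα_pos : 0 < α := by linarith
  have hα_inv : 0 < α⁻¹ := inv_pos.2 hα_pos
  have hα_inv_le : 3 * α⁻¹ ≤ 1 / 2 := by
    rw [← div_eq_mul_inv, div_le_iff₀ hα_pos]
    linarith
  obtain ⟨x₀, annulus⟩ :=
    exists_forall_closedBall_norm_mem_Icc (E N) (by linarith : 2 * α⁻¹ ≤ 1)
  let f : ContDiffBump x₀ := ⟨α⁻¹ / 2, α⁻¹, half_pos hα_inv, half_lt_self hα_inv⟩
  have norm_lt_one : ∀ x ∈ closedBall x₀ f.rOut, ‖x‖ < 1 := fun x hx ↦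
    (annulus x hx).2.trans_lt (sub_lt_self 1 hα_inv)
  have half_le_norm : ∀ x ∈ closedBall x₀ f.rOut, 1 / 2 ≤ ‖x‖ := fun x hx ↦ by
    linarith [(annulus x hx).1]
  have hf : closedBall x₀ f.rOut ⊆ ball 0 1 :=
    fun x hx ↦ mem_ball_zero_iff.2 (norm_lt_one x hx)
  refine ⟨x₀, f, rfl, rfl, memD_contDiffBump f hf, fun L hL ↦ ?_⟩
  have bound := ray2_contDiffBump_le (β := β) f hα_pos.le hp hr hf
    (fun x hx ↦ rpow_le_rpow_neg_abs one_half_pos (half_le_norm x hx) (norm_lt_one x hx).le _)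
    hL (by positivity)
    (fun x hx ↦ half_rpow_le_rpow_of_one_sub_mul_inv_le three_pos (by linarith)
      (annulus x (closedBall_subset_closedBall f.rIn_lt_rOut.le hx)).1)
  rwa [Measure.addHaar_real_closedBall _ _ f.rOut_pos.le,
    Measure.addHaar_real_closedBall _ _ f.rIn_pos.le, finrank_euclideanSpace_fin] at bound

lemma bump_bound_eq_const_mul_rpow (N : ℕ) {α r s K M V κ : ℝ} (hα : 0 < α) (hM : 0 ≤ M)
    (hV : 0 < V) (hκ : 0 < κ) :
    K * (M * ((α⁻¹ / 2)⁻¹) ^ 2) ^ r * (α⁻¹ ^ N * V) / (κ * ((α⁻¹ / 2) ^ N * V)) ^ s =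
      K * (4 * M) ^ r * V / (κ * V / 2 ^ N) ^ s * α ^ (2 * r - N + N * s) := by
  have lap_factor : (M * ((α⁻¹ / 2)⁻¹) ^ 2) ^ r = (4 * M) ^ r * α ^ (2 * r) := by
    rw [Real.rpow_mul hα.le, Real.rpow_two, ← Real.mul_rpow (by positivity) (by positivity)]
    congr 1
    field_simp
    norm_num
  have volume_factor : α⁻¹ ^ N = α ^ (-(N : ℝ)) := by
    rw [Real.rpow_neg hα.le, Real.rpow_natCast, inv_pow]
  have denominator : (κ * ((α⁻¹ / 2) ^ N * V)) ^ s = (κ * V / 2 ^ N) ^ s * α ^ (-(N * s)) := by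
    rw [← neg_mul, Real.rpow_mul hα.le, ← volume_factor,
      ← Real.mul_rpow (by positivity) (by positivity), div_pow]
    congr 1
    ring
  rw [lap_factor, denominator, volume_factor, sub_eq_add_neg, Real.rpow_add hα, Real.rpow_add hα,
    Real.rpow_neg hα.le (N * s)]
  field_simp

lemma exists_memD_ray2_le {N : ℕ} (hN : 1 ≤ N) (β : ℝ) {p r : ℝ} (hp : -1 < p) (hr : 0 < r) :
    ∃ C : ℝ, 0 < C ∧ ∀ α : ℝ, 6 ≤ α → ∃ u : E N → ℝ, memD u ∧
      ray2 α β p r u ≤ C * α ^ (2 * r - (N : ℝ) + (N : ℝ) * r / (p + 1)) := by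
  have : Nonempty (Fin N) := ⟨⟨0, hN⟩⟩
  obtain ⟨M, hM_pos, hM⟩ := exists_abs_lap_contDiffBump_le N one_lt_two
  set V : ℝ := volume.real (ball (0 : E N) 1) with hV_def
  have hV : 0 < V :=
    ENNReal.toReal_pos (measure_ball_pos _ _ one_pos).ne' measure_ball_lt_top.ne
  refine ⟨(1 / 2) ^ (-|-β * (r - 1)|) * (4 * M) ^ r * V /
    ((1 / 2) ^ (2 * 3 : ℝ) * V / 2 ^ N) ^ (r / (p + 1)), by positivity, fun α hα ↦ ?_⟩
  have hα_pos : 0 < α := by linarith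
  obtain ⟨x₀, f, hIn, hOut, hf, bound⟩ := exists_contDiffBump_ray2_le (N := N) β hα hp hr
  have ratio_eq : f.rOut / f.rIn = 2 := by
    rw [hIn, hOut]
    field_simp
  have hbound := bound _ (hM f ratio_eq)
  rw [hIn, ← hV_def,
    bump_bound_eq_const_mul_rpow N hα_pos hM_pos.le hV (by positivity), ← mul_div_assoc] at hbound
  exact ⟨f, hf, hbound⟩

end Concentration

theorem stmt17_general {N : ℕ} (hN : 1 ≤ N) (β : ℝ) {p r : ℝ} (hp : -1 < p) (hr : 0 < r) :
    ∃ C α₀ : ℝ, 0 < C ∧ 0 < α₀ ∧ ∀ α : ℝ, α₀ ≤ α →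
      (∃ u : E N → ℝ, memD u ∧
        ray2 α β p r u ≤ C * α ^ (2 * r - (N : ℝ) + (N : ℝ) * r / (p + 1))) ∧
      S2 N α β p r ≤ C * α ^ (2 * r - (N : ℝ) + (N : ℝ) * r / (p + 1)) := by
  obtain ⟨C, hC, h⟩ := exists_memD_ray2_le hN β hp hr
  refine ⟨C, 6, hC, by norm_num, fun α hα ↦ ?_⟩
  obtain ⟨u, hu, hle⟩ := h α hα
  exact ⟨⟨u, hu, hle⟩, (S2_le_ray2 hu α β p r).trans hle⟩

/-- Calanchi–Ruf upper estimate for the ground-state level: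
S_{α,β} ≤ C α^{2r - N + Nr/(p+1)} for α large. -/
theorem stmt17 {N : ℕ} (hN : 3 ≤ N) (β p q r : ℝ)
    (hβ : 0 < β) (hp : 1 < p) (hq : 1 < q)
    (hhyp : (N : ℝ) / (p + 1) + (N : ℝ) / (q + 1) > (N : ℝ) - 2)
    (hr : r = (q + 1) / q) :
    ∃ C α₀ : ℝ, 0 < C ∧ 0 < α₀ ∧ ∀ α : ℝ, α₀ ≤ α →
      (∃ u : E N → ℝ, memD u ∧
        ray2 α β p r u ≤ C * α ^ (2 * r - (N : ℝ) + (N : ℝ) * r / (p + 1))) ∧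
      S2 N α β p r ≤ C * α ^ (2 * r - (N : ℝ) + (N : ℝ) * r / (p + 1)) :=
  stmt17_general (by omega) β (by linarith) (by rw [hr]; positivity)
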